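/- Bernstein theorem for graphical self-shrinkers: if u: ℝⁿ → ℝ is a smooth entire solution of div(Du/√(1+|Du|²)) = (x·Du − u)/(2√(1+|Du|²)), then u(x) = a₁x₁ + ⋯ + aₙxₙ for some constants a₁,…,aₙ ∈ ℝ. In particular, the graph of u is a hyperplane through the origin. -/

import Mathlib

open Real MeasureTheory Metric Filter
open scoped RealInnerProductSpace ENNReal NNReal

noncomputable section

abbrev E (n : ℕ) : Type := EuclideanSpace ℝ (Fin n)

variable {n : ℕ}

/-- `√(1 + |Du|²)`, the area element of the graph of `u`. -/
def aEl (u : E n → ℝ) (x : E n) : ℝ := Real.sqrt (1 + ‖gradient u x‖ ^ 2)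

/-- The vector field `Du/√(1+|Du|²)`. -/
def Vfield (u : E n → ℝ) (x : E n) : E n := (aEl u x)⁻¹ • gradient u x

/-- `div (Du/√(1+|Du|²))`. -/
def divV (u : E n → ℝ) (x : E n) : ℝ :=
  ∑ i, fderiv ℝ (fun y => Vfield u y i) x (EuclideanSpace.single i 1)

/-- The self-shrinker equation for an entire graph. -/
def ShrinkerEq (u : E n → ℝ) : Prop :=
  ∀ x, divV u x = (⟪x, gradient u x⟫ - u x) / (2 * aEl u x)

/-- The mean curvature of the graph of `u` with respect to the upward unit normal. -/
def meanCurv (u : E n → ℝ) (x : E n) : ℝ := -divV u x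

/-- The position vector `X = (x, u x)` of a point of the graph. -/
def Pos (u : E n → ℝ) (x : E n) : E (n + 1) :=
  (WithLp.equiv 2 (Fin (n + 1) → ℝ)).symm (Fin.snoc ((WithLp.equiv 2 (Fin n → ℝ)) x) (u x))

/-- The upward unit normal `n = (-Du, 1)/√(1+|Du|²)` at the point of the graph over `x`. -/
def NmlAt (u : E n → ℝ) (x : E n) : E (n + 1) :=
  (WithLp.equiv 2 (Fin (n + 1) → ℝ)).symm
    (Fin.snoc (fun i => -(Vfield u x i)) ((aEl u x)⁻¹))

/-- Projection of `ℝ^{n+1}` onto the first `n` coordinates. -/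
def projE (p : E (n + 1)) : E n :=
  (WithLp.equiv 2 (Fin n → ℝ)).symm fun i => p i.castSucc

/-- The unit normal of the graph, extended to `ℝ^{n+1}` independently of the last coordinate. -/
def Nml (u : E n → ℝ) (p : E (n + 1)) : E (n + 1) := NmlAt u (projE p)

/-- The inverse induced metric `g^{ij} = δ_{ij} - u_i u_j/(1+|Du|²)` of the graph. -/
def ginv (u : E n → ℝ) (x : E n) (i j : Fin n) : ℝ :=
  (if i = j then 1 else 0) - gradient u x i * gradient u x j / (aEl u x) ^ 2

/-- The Hessian `u_{ij}` of `u`. -/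
def hess (u : E n → ℝ) (x : E n) (i j : Fin n) : ℝ :=
  fderiv ℝ (fun y => gradient u y j) x (EuclideanSpace.single i 1)

/-- `|A|²`, the squared norm of the second fundamental form of the graph of `u`:
`|A|² = g^{ik} g^{jl} h_{ij} h_{kl}` with `h_{ij} = u_{ij}/√(1+|Du|²)`. -/
def A2 (u : E n → ℝ) (x : E n) : ℝ :=
  (∑ i, ∑ j, ∑ k, ∑ l, ginv u x i k * ginv u x j l * hess u x i j * hess u x k l) /
    (aEl u x) ^ 2

/-- Coordinate components `g^{ij} ∂_j f` of the tangential gradient. -/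
def gradCoord (u f : E n → ℝ) (x : E n) (i : Fin n) : ℝ :=
  ∑ j, ginv u x i j * gradient f x j

/-- The tangential gradient `∇_Σ f` (for `f` defined on the base, pulled back to the graph),
as a vector in `ℝ^{n+1}`. -/
def gradSigma (u f : E n → ℝ) (x : E n) : E (n + 1) :=
  (WithLp.equiv 2 (Fin (n + 1) → ℝ)).symm
    (Fin.snoc (fun i => gradCoord u f x i) (∑ i, gradient u x i * gradCoord u f x i))

/-- The Laplace–Beltrami operator of the graph:
`Δ_Σ f = (1/√g) ∂_i (√g g^{ij} ∂_j f)`. -/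
def lapSigma (u f : E n → ℝ) (x : E n) : ℝ :=
  (aEl u x)⁻¹ *
    ∑ i, fderiv ℝ (fun y => aEl u y * gradCoord u f y i) x (EuclideanSpace.single i 1)

/-- The tangential gradient `∇_Σ η` of an ambient function `η : ℝ^{n+1} → ℝ` along the graph:
the ambient gradient minus its normal component. -/
def gradSigmaAmb (u : E n → ℝ) (η : E (n + 1) → ℝ) (x : E n) : E (n + 1) :=
  gradient η (Pos u x) - ⟪gradient η (Pos u x), NmlAt u x⟫ • NmlAt u x

/-- `Vol(Σ ∩ B_R)`: the area of the part of the graph inside the ball of radius `R`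
in `ℝ^{n+1}`, computed by the area formula. -/
def sVol (u : E n → ℝ) (R : ℝ) : ℝ := ∫ x in {x : E n | ‖Pos u x‖ ≤ R}, aEl u x

/-- `M_R = sup_{|x| ≤ R} |u|`. -/
def supBall (u : E n → ℝ) (R : ℝ) : ℝ := ⨆ x : Metric.closedBall (0 : E n) R, |u x.1|

end

/-!
Let `W = √(1+|Du|²)`, `ν = Du/W` and let `σ = (u - x·Du)/W` be the support function of the graph,
so that the equation reads `div ν = -σ/2`. With the Gaussian weight `ρ = exp(-|X|²/4)`, where
`X = (x, u)`, the derivative of the equation in a direction `e` is the divergence form equation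
`div(ρ ∂ₑν) = 0`, in which `∂ₑν = W⁻¹ g⁻¹ D∂ₑu`. Testing with `χ² ∂ₑu`, and using
`(∂ₑu)² ≤ W²|e|²`, gives the Caccioppoli inequality

  `∫ χ² ρ W⁻¹ g⁻¹(D∂ₑu, D∂ₑu) ≤ 4|e|² ∫ ρ W g⁻¹(Dχ, Dχ)`.

No growth assumption is needed because the weighted area `∫ ρ W` is finite: the tangential part
`Z` of `X` satisfies `div(ρ W Z) = ρ W (n - |X|²/2)`, so the weighted area is controlled by that
inside a fixed ball. For cutoffs `χ` in `|X|²/R` the right-hand side is then `O(1/R)`, hence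
`D²u = 0`. So `ν` is constant, `σ = -2 div ν = 0`, and `u = x·Du` with `Du` constant.
-/

open InnerProductSpace
open scoped ContDiff Gradient

section Gradient

variable {V : Type*} [NormedAddCommGroup V] [InnerProductSpace ℝ V] [CompleteSpace V]
  {f g : V → ℝ} {x : V}

lemma contDiff_gradient {m k : ℕ∞ω} (hf : ContDiff ℝ m f) (hk : k + 1 ≤ m) :
    ContDiff ℝ k (∇ f) :=
  (toDual ℝ V).symm.contDiff.comp (hf.fderiv_right hk)

lemma gradient_mul (hf : DifferentiableAt ℝ f x) (hg : DifferentiableAt ℝ g x) :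
    ∇ (fun y ↦ f y * g y) x = f x • ∇ g x + g x • ∇ f x := by
  simp only [gradient, fderiv_fun_mul hf hg, map_add, map_smul]

lemma gradient_comp {h : ℝ → ℝ} {h' : ℝ} (hh : HasDerivAt h h' (f x))
    (hf : DifferentiableAt ℝ f x) : ∇ (fun y ↦ h (f y)) x = h' • ∇ f x := by
  have hcomp : fderiv ℝ (fun y ↦ h (f y)) x = h' • fderiv ℝ f x :=
    (hh.comp_hasFDerivAt x hf.hasFDerivAt).fderiv
  rw [gradient, hcomp, map_smul, gradient]

lemma inner_fderiv_gradient_apply (hf : ContDiff ℝ 2 f) (v w : V) :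
    ⟪fderiv ℝ (∇ f) x v, w⟫ = fderiv ℝ (fderiv ℝ f) x v w := by
  have hd : DifferentiableAt ℝ (∇ f) x :=
    (contDiff_gradient hf (by norm_num)).differentiable one_ne_zero x
  have hd' : DifferentiableAt ℝ (fderiv ℝ f) x :=
    (hf.fderiv_right (m := 1) (by norm_num)).differentiable one_ne_zero x
  have h := fderiv_inner_apply ℝ hd (differentiableAt_const w) v
  simp only [inner_gradient_left, fderiv_clm_apply hd' (differentiableAt_const w)] at h
  simpa using h.symm

lemma inner_fderiv_gradient_comm (hf : ContDiff ℝ 2 f) (v w : V) :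
    ⟪fderiv ℝ (∇ f) x v, w⟫ = ⟪v, fderiv ℝ (∇ f) x w⟫ := by
  have hsymm : IsSymmSndFDerivAt ℝ f x := hf.contDiffAt.isSymmSndFDerivAt (by simp)
  rw [real_inner_comm _ v, inner_fderiv_gradient_apply hf, inner_fderiv_gradient_apply hf, hsymm.eq]

lemma gradient_inner_gradient (hf : ContDiff ℝ 2 f) (v : V) :
    ∇ (fun y ↦ ⟪∇ f y, v⟫) x = fderiv ℝ (∇ f) x v := by
  refine ext_inner_right ℝ fun w ↦ ?_
  rw [inner_gradient_left, fderiv_inner_apply _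
    ((contDiff_gradient hf (by norm_num)).differentiable one_ne_zero x)
    (differentiableAt_const v), inner_fderiv_gradient_comm hf v, real_inner_comm v]
  simp

end Gradient

lemma integrable_mul_of_hasCompactSupport {X : Type*} [TopologicalSpace X] [MeasurableSpace X]
    [OpensMeasurableSpace X] {μ : Measure X} [IsFiniteMeasureOnCompacts μ] {φ g : X → ℝ}
    (hφ : Continuous φ) (hφc : HasCompactSupport φ) (hg : Continuous g) :
    Integrable (fun x ↦ φ x * g x) μ :=
  (hφ.mul hg).integrable_of_hasCompactSupport hφc.mul_right

section IntegrationByParts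

variable {V : Type*} [NormedAddCommGroup V] [NormedSpace ℝ V] [MeasurableSpace V] [BorelSpace V]
  (μ : Measure V) [μ.IsAddHaarMeasure] {φ g : V → ℝ}

lemma integrable_fderiv_apply_mul (hφ : ContDiff ℝ 1 φ) (hφc : HasCompactSupport φ)
    (hg : Continuous g) (v : V) : Integrable (fun x ↦ fderiv ℝ φ x v * g x) μ :=
  integrable_mul_of_hasCompactSupport
    ((hφ.continuous_fderiv one_ne_zero).clm_apply continuous_const) (hφc.fderiv_apply ℝ v) hg

lemma integral_slope_mul_eq_integral_mul_slope (hφ : Continuous φ) (hφc : HasCompactSupport φ)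
    (hg : Continuous g) (v : V) (t : ℝ) :
    ∫ x, t⁻¹ • (φ (x + t • v) - φ x) * g x ∂μ =
      ∫ x, t⁻¹ • (g (x + t • -v) - g x) * φ x ∂μ := by
  have hφt : Integrable (fun x ↦ φ (x + t • v) * g x) μ :=
    integrable_mul_of_hasCompactSupport (hφ.comp (continuous_add_const _))
      (hφc.comp_homeomorph (Homeomorph.addRight (t • v))) hg
  have hgt : Integrable (fun x ↦ φ x * g (x + t • -v)) μ :=
    integrable_mul_of_hasCompactSupport hφ hφc (hg.comp (continuous_add_const _))
  have hφg : Integrable (fun x ↦ φ x * g x) μ := integrable_mul_of_hasCompactSupport hφ hφc hg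
  have htrans : ∫ x, φ (x + t • v) * g x ∂μ = ∫ x, φ x * g (x + t • -v) ∂μ := by
    simpa using integral_add_right_eq_self (μ := μ) (fun x ↦ φ x * g (x + t • -v)) (t • v)
  calc ∫ x, t⁻¹ • (φ (x + t • v) - φ x) * g x ∂μ
      = t⁻¹ * (∫ x, φ (x + t • v) * g x ∂μ - ∫ x, φ x * g x ∂μ) := by
        rw [← integral_sub hφt hφg, ← integral_const_mul]
        congr with x; simp only [smul_eq_mul]; ring
    _ = t⁻¹ * (∫ x, φ x * g (x + t • -v) ∂μ - ∫ x, φ x * g x ∂μ) := by rw [htrans]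
    _ = ∫ x, t⁻¹ • (g (x + t • -v) - g x) * φ x ∂μ := by
        rw [← integral_sub hgt hφg, ← integral_const_mul]
        congr with x; simp only [smul_eq_mul]; ring

variable [FiniteDimensional ℝ V]

lemma integral_mul_fderiv_apply (hφ : ContDiff ℝ 1 φ) (hφc : HasCompactSupport φ)
    (hg : ContDiff ℝ 1 g) (v : V) :
    ∫ x, φ x * fderiv ℝ g x v ∂μ = -∫ x, fderiv ℝ φ x v * g x ∂μ :=
  integral_mul_fderiv_eq_neg_fderiv_mul_of_integrable
    (integrable_fderiv_apply_mul μ hφ hφc hg.continuous v)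
    (integrable_mul_of_hasCompactSupport hφ.continuous hφc
      ((hg.continuous_fderiv one_ne_zero).clm_apply continuous_const))
    (integrable_mul_of_hasCompactSupport hφ.continuous hφc hg.continuous)
    (fun x _ ↦ hφ.differentiable one_ne_zero x) (fun x _ ↦ hg.differentiable one_ne_zero x)

-- For functions of class `C²` two integrations by parts exchange `v` and `w`. For `C¹` functions
-- one of the derivatives is replaced by a difference quotient, which can be moved to the other
-- factor by translation before passing to the limit.
lemma integral_slope_mul_fderiv_apply (hφ : ContDiff ℝ 1 φ) (hφc : HasCompactSupport φ)
    (hg : ContDiff ℝ 1 g) (v w : V) (t : ℝ) :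
    ∫ x, t⁻¹ • (φ (x + t • v) - φ x) * fderiv ℝ g x w ∂μ =
      -∫ x, t⁻¹ • (g (x + t • -v) - g x) * fderiv ℝ φ x w ∂μ := by
  have hgt : ContDiff ℝ 1 fun x ↦ g (x + t • -v) := by fun_prop
  have hslope (x : V) : fderiv ℝ (fun y ↦ t⁻¹ • (g (y + t • -v) - g y)) x w =
      t⁻¹ • (fderiv ℝ g (x + t • -v) w - fderiv ℝ g x w) := by
    have hgt' := hgt.differentiable one_ne_zero x
    have hg' := hg.differentiable one_ne_zero x
    rw [fderiv_fun_const_smul (hgt'.fun_sub hg'), fderiv_fun_sub hgt' hg', fderiv_comp_add_right]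
    rfl
  rw [integral_slope_mul_eq_integral_mul_slope μ hφ.continuous hφc
    ((hg.continuous_fderiv one_ne_zero).clm_apply continuous_const)]
  simp only [← hslope, mul_comm _ (φ _), mul_comm _ (fderiv ℝ φ _ _)]
  exact integral_mul_fderiv_apply μ hφ hφc (by fun_prop) w

lemma integral_fderiv_mul_fderiv_comm_of_hasCompactSupport (hφ : ContDiff ℝ 1 φ)
    (hφc : HasCompactSupport φ) (hg : ContDiff ℝ 1 g) (hgc : HasCompactSupport g) (v w : V) :
    ∫ x, fderiv ℝ φ x v * fderiv ℝ g x w ∂μ = ∫ x, fderiv ℝ φ x w * fderiv ℝ g x v ∂μ := by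
  obtain ⟨C, hφL⟩ := hφ.lipschitzWith_of_hasCompactSupport hφc one_ne_zero
  obtain ⟨D, hgL⟩ := hg.lipschitzWith_of_hasCompactSupport hgc one_ne_zero
  have hφlim := hφL.integral_inv_smul_sub_mul_tendsto_integral_lineDeriv_mul' (μ := μ) hφc
    ((hg.continuous_fderiv one_ne_zero).clm_apply (continuous_const (y := w))) v
  have hglim := (hgL.integral_inv_smul_sub_mul_tendsto_integral_lineDeriv_mul' (μ := μ) hgc
    ((hφ.continuous_fderiv one_ne_zero).clm_apply (continuous_const (y := w))) (-v)).neg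
  simp only [integral_slope_mul_fderiv_apply μ hφ hφc hg] at hφlim
  have h := tendsto_nhds_unique hφlim hglim
  simp only [(hφ.differentiable one_ne_zero _).lineDeriv_eq_fderiv,
    (hg.differentiable one_ne_zero _).lineDeriv_eq_fderiv] at h
  rw [h, ← integral_neg]
  congr with x
  rw [map_neg]
  ring

lemma integral_fderiv_mul_fderiv_comm (hφ : ContDiff ℝ 1 φ) (hφc : HasCompactSupport φ)
    (hg : ContDiff ℝ 1 g) (v w : V) :
    ∫ x, fderiv ℝ φ x v * fderiv ℝ g x w ∂μ = ∫ x, fderiv ℝ φ x w * fderiv ℝ g x v ∂μ := by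
  obtain ⟨r, hr, hφr⟩ := hφc.isCompact.isBounded.subset_ball_lt 0 0
  let b : ContDiffBump (0 : V) := ⟨r, r + 1, hr, lt_add_one r⟩
  have hlocal (x a c : V) :
      fderiv ℝ φ x a * fderiv ℝ (fun y ↦ b y * g y) x c = fderiv ℝ φ x a * fderiv ℝ g x c := by
    by_cases hx : x ∈ tsupport φ
    · have hbg : (fun y ↦ b y * g y) =ᶠ[nhds x] g := by
        filter_upwards [b.eventuallyEq_one_of_mem_ball (hφr hx)] with y hy
        simp [hy]
      rw [hbg.fderiv_eq]
    · simp [fderiv_of_notMem_tsupport ℝ hx]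
  simpa only [hlocal] using integral_fderiv_mul_fderiv_comm_of_hasCompactSupport μ hφ hφc
    (b.contDiff.mul hg) b.hasCompactSupport.mul_right v w

end IntegrationByParts

section Divergence

variable {V : Type*} [NormedAddCommGroup V] [InnerProductSpace ℝ V]

/-- The divergence of a vector field on a Euclidean space, as the trace of its derivative. -/
noncomputable def divergence (X : V → V) (x : V) : ℝ :=
  LinearMap.trace ℝ V (fderiv ℝ X x : V →ₗ[ℝ] V)

variable {f φ : V → ℝ} {X Y : V → V} {x : V}

lemma divergence_add (hX : DifferentiableAt ℝ X x) (hY : DifferentiableAt ℝ Y x) :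
    divergence (fun y ↦ X y + Y y) x = divergence X x + divergence Y x := by
  simp [divergence, fderiv_fun_add hX hY]

lemma fderiv_const_inner_apply (hX : DifferentiableAt ℝ X x) (v w : V) :
    fderiv ℝ (fun y ↦ ⟪w, X y⟫) x v = ⟪w, fderiv ℝ X x v⟫ := by
  rw [fderiv_inner_apply ℝ (differentiableAt_const w) hX]
  simp

lemma divergence_eq_sum {ι : Type*} [Fintype ι] (b : OrthonormalBasis ι ℝ V) :
    divergence X x = ∑ i, ⟪b i, fderiv ℝ X x (b i)⟫ :=
  LinearMap.trace_eq_sum_inner _ b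

variable [FiniteDimensional ℝ V]

lemma divergence_id : divergence (fun y : V ↦ y) x = Module.finrank ℝ V := by
  simp [divergence, LinearMap.trace_id]

lemma divergence_smul (hf : DifferentiableAt ℝ f x) (hX : DifferentiableAt ℝ X x) :
    divergence (fun y ↦ f y • X y) x = ⟪∇ f x, X x⟫ + f x * divergence X x := by
  let b := stdOrthonormalBasis ℝ V
  simp only [divergence_eq_sum b, fderiv_fun_smul hf hX, add_apply,
    smul_apply, ContinuousLinearMap.smulRight_apply, inner_add_right,
    inner_smul_right, Finset.sum_add_distrib, ← Finset.mul_sum, ← inner_gradient_left,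
    b.sum_inner_mul_inner, add_comm]

variable [MeasurableSpace V] [BorelSpace V] (μ : Measure V) [μ.IsAddHaarMeasure]

lemma integrable_inner_gradient (hφ : ContDiff ℝ 1 φ) (hφc : HasCompactSupport φ)
    (hX : Continuous X) : Integrable (fun x ↦ ⟪∇ φ x, X x⟫) μ := by
  have hgrad : Continuous (∇ φ) := (contDiff_gradient (k := 0) hφ (by norm_num)).continuous
  refine (hgrad.inner hX).integrable_of_hasCompactSupport (hφc.mono' fun x hx ↦ ?_)
  contrapose! hx
  simp [gradient, fderiv_of_notMem_tsupport ℝ hx]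

lemma integral_mul_divergence (hφ : ContDiff ℝ 1 φ) (hφc : HasCompactSupport φ)
    (hX : ContDiff ℝ 1 X) :
    ∫ x, φ x * divergence X x ∂μ = -∫ x, ⟪∇ φ x, X x⟫ ∂μ := by
  let b := stdOrthonormalBasis ℝ V
  have hXb (i) : ContDiff ℝ 1 fun x ↦ ⟪b i, X x⟫ := contDiff_const.inner ℝ hX
  have hdiv (x) : divergence X x = ∑ i, fderiv ℝ (fun y ↦ ⟪b i, X y⟫) x (b i) := by
    simp only [divergence_eq_sum b, fderiv_const_inner_apply (hX.differentiable one_ne_zero x)]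
  have hinner (x) : ⟪∇ φ x, X x⟫ = ∑ i, fderiv ℝ φ x (b i) * ⟪b i, X x⟫ := by
    simp only [← inner_gradient_left, b.sum_inner_mul_inner]
  simp only [hdiv, hinner, Finset.mul_sum]
  rw [integral_finsetSum, integral_finsetSum, ← Finset.sum_neg_distrib]
  · exact Finset.sum_congr rfl fun i _ ↦ integral_mul_fderiv_apply μ hφ hφc (hXb i) (b i)
  · exact fun i _ ↦ integrable_fderiv_apply_mul μ hφ hφc (hXb i).continuous (b i)
  · exact fun i _ ↦ integrable_mul_of_hasCompactSupport hφ.continuous hφc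
      (((hXb i).continuous_fderiv one_ne_zero).clm_apply continuous_const)

lemma integral_inner_gradient_fderiv_apply (hφ : ContDiff ℝ 1 φ) (hφc : HasCompactSupport φ)
    (hX : ContDiff ℝ 1 X) (e : V) :
    ∫ x, ⟪∇ φ x, fderiv ℝ X x e⟫ ∂μ = ∫ x, fderiv ℝ φ x e * divergence X x ∂μ := by
  let b := stdOrthonormalBasis ℝ V
  have hXb (i) : ContDiff ℝ 1 fun x ↦ ⟪b i, X x⟫ := contDiff_const.inner ℝ hX
  have hcoord (x v) (i) : fderiv ℝ (fun y ↦ ⟪b i, X y⟫) x v = ⟪b i, fderiv ℝ X x v⟫ :=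
    fderiv_const_inner_apply (hX.differentiable one_ne_zero x) v (b i)
  have hintegrable (v w) (i) :
      Integrable (fun x ↦ fderiv ℝ φ x v * fderiv ℝ (fun y ↦ ⟪b i, X y⟫) x w) μ :=
    integrable_fderiv_apply_mul μ hφ hφc
      (((hXb i).continuous_fderiv one_ne_zero).clm_apply continuous_const) v
  have hleft (x) : ⟪∇ φ x, fderiv ℝ X x e⟫ =
      ∑ i, fderiv ℝ φ x (b i) * fderiv ℝ (fun y ↦ ⟪b i, X y⟫) x e := by
    simp only [hcoord, ← inner_gradient_left, b.sum_inner_mul_inner]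
  have hright (x) : fderiv ℝ φ x e * divergence X x =
      ∑ i, fderiv ℝ φ x e * fderiv ℝ (fun y ↦ ⟪b i, X y⟫) x (b i) := by
    simp only [hcoord, divergence_eq_sum b, Finset.mul_sum]
  simp only [hleft, hright]
  rw [integral_finsetSum _ fun i _ ↦ hintegrable _ _ i,
    integral_finsetSum _ fun i _ ↦ hintegrable _ _ i]
  exact Finset.sum_congr rfl fun i _ ↦ integral_fderiv_mul_fderiv_comm μ hφ hφc (hXb i) _ _

end Divergence

section Sharp

variable {V : Type*} [NormedAddCommGroup V] [InnerProductSpace ℝ V]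

lemma half_sq_mul_inner_sub_le_inner_smul_add_smul {T : V →L[ℝ] V} (hT : T.IsPositive) (ξ ζ : V)
    (s t : ℝ) :
    s ^ 2 / 2 * ⟪T ξ, ξ⟫ - 2 * t ^ 2 * ⟪T ζ, ζ⟫ ≤ ⟪s ^ 2 • ξ + (2 * s * t) • ζ, T ξ⟫ := by
  have hsymm : ⟪T ζ, ξ⟫ = ⟪T ξ, ζ⟫ := by
    rw [hT.inner_left_eq_inner_right, real_inner_comm]
  have h := hT.inner_nonneg_left (s • ξ + (2 * t) • ζ)
  simp only [map_add, map_smul, inner_add_left, inner_add_right, real_inner_smul_left,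
    real_inner_smul_right, hsymm, real_inner_comm (T ξ)] at h ⊢
  linarith

/-- The operator `ξ ↦ ξ - ⟪w, ξ⟫ w`. For `w = Du/√(1+|Du|²)` its matrix is the inverse metric
`g^{ij}` of the graph of `u`, so it raises the index of a covector on the graph. -/
noncomputable def sharp (w : V) : V →L[ℝ] V := ContinuousLinearMap.id ℝ V - rankOne ℝ w w

variable {w : V}

lemma sharp_apply (ξ : V) : sharp w ξ = ξ - ⟪w, ξ⟫ • w := rfl

lemma inner_sharp_comm (ξ ζ : V) : ⟪sharp w ξ, ζ⟫ = ⟪ξ, sharp w ζ⟫ := by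
  simp only [sharp_apply, inner_sub_left, inner_sub_right, real_inner_smul_left,
    real_inner_smul_right, real_inner_comm w]
  ring

lemma one_sub_norm_sq_mul_le_inner_sharp (ξ : V) :
    (1 - ‖w‖ ^ 2) * ‖ξ‖ ^ 2 ≤ ⟪sharp w ξ, ξ⟫ := by
  have hCS : ⟪w, ξ⟫ ^ 2 ≤ (‖w‖ * ‖ξ‖) ^ 2 :=
    sq_le_sq.2 ((abs_real_inner_le_norm w ξ).trans (le_abs_self _))
  rw [sharp_apply, inner_sub_left, real_inner_smul_left, real_inner_self_eq_norm_sq]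
  linarith

lemma isPositive_sharp (hw : ‖w‖ ≤ 1) : (sharp w).IsPositive := by
  refine (ContinuousLinearMap.isPositive_iff _).2 ⟨inner_sharp_comm, fun ξ ↦ ?_⟩
  have hw' : 0 ≤ 1 - ‖w‖ ^ 2 := by nlinarith [norm_nonneg w]
  exact (mul_nonneg hw' (sq_nonneg _)).trans (one_sub_norm_sq_mul_le_inner_sharp ξ)

end Sharp

section MaxZeroSq

lemma hasDerivAt_max_zero_sq (t : ℝ) :
    HasDerivAt (fun s : ℝ ↦ max s 0 ^ 2) (2 * max t 0) t := by
  rcases lt_trichotomy t 0 with h | rfl | h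
  · have hzero : (fun s : ℝ ↦ max s 0 ^ 2) =ᶠ[nhds t] fun _ ↦ 0 := by
      filter_upwards [gt_mem_nhds h] with s hs
      simp [max_eq_right hs.le]
    simpa [max_eq_right h.le] using (hasDerivAt_const t (0 : ℝ)).congr_of_eventuallyEq hzero
  · rw [hasDerivAt_iff_isLittleO]
    refine Asymptotics.IsBigO.trans_isLittleO (g := fun s : ℝ ↦ s ^ 2) ?_ ?_
    · refine Asymptotics.IsBigO.of_bound 1 (Eventually.of_forall fun s ↦ ?_)
      rcases le_total s 0 with h | h <;> simp [h, sq_nonneg]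
    · simpa using Asymptotics.isLittleO_pow_id (𝕜 := ℝ) (n := 2) (by norm_num)
  · have hsq : (fun s : ℝ ↦ max s 0 ^ 2) =ᶠ[nhds t] fun s ↦ s ^ 2 := by
      filter_upwards [lt_mem_nhds h] with s hs
      simp [max_eq_left hs.le]
    simpa [max_eq_left h.le] using (hasDerivAt_pow 2 t).congr_of_eventuallyEq hsq

lemma contDiff_max_zero_sq : ContDiff ℝ 1 (fun s : ℝ ↦ max s 0 ^ 2) := by
  have hderiv : deriv (fun s : ℝ ↦ max s 0 ^ 2) = fun t ↦ 2 * max t 0 :=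
    funext fun t ↦ (hasDerivAt_max_zero_sq t).deriv
  rw [contDiff_one_iff_deriv, hderiv]
  exact ⟨fun t ↦ (hasDerivAt_max_zero_sq t).differentiableAt, by fun_prop⟩

end MaxZeroSq

section GraphGeometry

variable {n : ℕ} {u : E n → ℝ} {x : E n}

lemma aEl_sq : aEl u x ^ 2 = 1 + ‖∇ u x‖ ^ 2 := Real.sq_sqrt (by positivity)

lemma aEl_pos : 0 < aEl u x := Real.sqrt_pos.2 (by positivity)

lemma aEl_smul_Vfield : aEl u x • Vfield u x = ∇ u x := smul_inv_smul₀ aEl_pos.ne' _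

lemma one_sub_norm_Vfield_sq : 1 - ‖Vfield u x‖ ^ 2 = (aEl u x ^ 2)⁻¹ := by
  have hgrad : ‖∇ u x‖ ^ 2 = aEl u x ^ 2 - 1 := by linarith [aEl_sq (u := u) (x := x)]
  have hW : aEl u x ≠ 0 := aEl_pos.ne'
  rw [Vfield, norm_smul, mul_pow, norm_inv, Real.norm_eq_abs, inv_pow, sq_abs, hgrad]
  field_simp
  ring

lemma isPositive_sharp_Vfield : (sharp (Vfield u x)).IsPositive := by
  have hpos : 0 ≤ 1 - ‖Vfield u x‖ ^ 2 := one_sub_norm_Vfield_sq ▸ by positivity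
  exact isPositive_sharp ((sq_le_one_iff₀ (norm_nonneg _)).1 (sub_nonneg.1 hpos))

lemma contDiff_aEl (hu : ContDiff ℝ 2 u) : ContDiff ℝ 1 (aEl u) :=
  (contDiff_const.add ((contDiff_gradient hu (by norm_num)).norm_sq ℝ)).sqrt
    fun _ ↦ by positivity

lemma contDiff_Vfield (hu : ContDiff ℝ 2 u) : ContDiff ℝ 1 (Vfield u) :=
  ((contDiff_aEl hu).inv fun _ ↦ aEl_pos.ne').smul (contDiff_gradient hu (by norm_num))

lemma differentiableAt_gradient (hu : ContDiff ℝ 2 u) : DifferentiableAt ℝ (∇ u) x :=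
  (contDiff_gradient hu (by norm_num)).differentiable one_ne_zero x

lemma fderiv_aEl_apply (hu : ContDiff ℝ 2 u) (v : E n) :
    fderiv ℝ (aEl u) x v = ⟪Vfield u x, fderiv ℝ (∇ u) x v⟫ := by
  have hsq : HasFDerivAt (fun y ↦ 1 + ‖∇ u y‖ ^ 2)
      (2 • (innerSL ℝ (∇ u x)).comp (fderiv ℝ (∇ u) x)) x :=
    (differentiableAt_gradient hu).hasFDerivAt.norm_sq.const_add 1
  have h := (hsq.sqrt (by positivity)).fderiv
  change fderiv ℝ (aEl u) x = _ at h
  rw [h, Vfield, real_inner_smul_left]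
  change 1 / (2 * aEl u x) * (2 • ⟪∇ u x, _⟫) = _
  rw [nsmul_eq_mul]
  push_cast
  field_simp

lemma gradient_aEl (hu : ContDiff ℝ 2 u) :
    ∇ (aEl u) x = fderiv ℝ (∇ u) x (Vfield u x) := by
  refine ext_inner_right ℝ fun v ↦ ?_
  rw [inner_gradient_left, fderiv_aEl_apply hu, inner_fderiv_gradient_comm hu]

lemma fderiv_Vfield_apply (hu : ContDiff ℝ 2 u) (v : E n) :
    fderiv ℝ (Vfield u) x v = (aEl u x)⁻¹ • sharp (Vfield u x) (fderiv ℝ (∇ u) x v) := by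
  have hprod : fderiv ℝ (∇ u) x v =
      aEl u x • fderiv ℝ (Vfield u) x v + fderiv ℝ (aEl u) x v • Vfield u x := by
    rw [← funext fun y ↦ aEl_smul_Vfield (u := u) (x := y),
      fderiv_fun_smul ((contDiff_aEl hu).differentiable one_ne_zero x)
        ((contDiff_Vfield hu).differentiable one_ne_zero x)]
    simp
  rw [eq_inv_smul_iff₀ aEl_pos.ne', sharp_apply, ← fderiv_aEl_apply hu, eq_sub_iff_add_eq, hprod]

lemma divV_eq_divergence (hu : ContDiff ℝ 2 u) : divV u x = divergence (Vfield u) x := by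
  have hν : DifferentiableAt ℝ (Vfield u) x := (contDiff_Vfield hu).differentiable one_ne_zero x
  rw [divV, divergence_eq_sum (EuclideanSpace.basisFun (Fin n) ℝ)]
  refine Finset.sum_congr rfl fun i _ ↦ ?_
  have hproj := ((EuclideanSpace.proj (𝕜 := ℝ) i).hasFDerivAt.comp x hν.hasFDerivAt).fderiv
  change fderiv ℝ (fun y ↦ Vfield u y i) x = _ at hproj
  rw [hproj, EuclideanSpace.basisFun_apply, EuclideanSpace.inner_single_left]
  simp

lemma norm_Pos_sq : ‖Pos u x‖ ^ 2 = ‖x‖ ^ 2 + u x ^ 2 := by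
  simp [EuclideanSpace.norm_sq_eq, Pos, Fin.sum_univ_castSucc]

lemma contDiff_norm_Pos_sq {m : ℕ∞ω} (hu : ContDiff ℝ m u) :
    ContDiff ℝ m fun y ↦ ‖Pos u y‖ ^ 2 := by
  simp only [norm_Pos_sq]
  exact (contDiff_id.norm_sq ℝ).add (hu.pow 2)

/-- The support function `σ = ⟪X, N⟫` of the graph of `u`, with `X` the position vector and `N`
the upward unit normal. -/
noncomputable def supportFun (u : E n → ℝ) (x : E n) : ℝ := ⟪Pos u x, NmlAt u x⟫

lemma aEl_mul_supportFun : aEl u x * supportFun u x = u x - ⟪x, ∇ u x⟫ := by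
  have hσ : supportFun u x = u x * (aEl u x)⁻¹ - ⟪x, Vfield u x⟫ := by
    simp only [supportFun, Pos, NmlAt, WithLp.equiv_apply, WithLp.equiv_symm_apply,
      PiLp.inner_apply, RCLike.inner_apply, ringHom_apply, Fin.sum_univ_castSucc,
      Fin.snoc_castSucc, Fin.snoc_last, neg_mul, Finset.sum_neg_distrib]
    ring
  rw [hσ, Vfield, real_inner_smul_right]
  have hW : aEl u x ≠ 0 := aEl_pos.ne'
  field_simp

lemma divergence_Vfield (hu : ContDiff ℝ 2 u) (hs : ShrinkerEq u) :
    divergence (Vfield u) x = -supportFun u x / 2 := by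
  rw [← divV_eq_divergence hu, hs x, ← neg_sub (u x), ← aEl_mul_supportFun]
  have hW : aEl u x ≠ 0 := aEl_pos.ne'
  field_simp

/-- Half the gradient of `|X|² = |x|² + u²`, as a vector field on the base of the graph. -/
noncomputable def posGrad (u : E n → ℝ) (x : E n) : E n := x + u x • ∇ u x

lemma hasGradientAt_norm_Pos_sq (hu : DifferentiableAt ℝ u x) :
    HasGradientAt (fun y ↦ ‖Pos u y‖ ^ 2) ((2 : ℝ) • posGrad u x) x := by
  simp only [norm_Pos_sq]
  refine ((hasFDerivAt_id x).norm_sq.add (hu.hasFDerivAt.pow 2)).congr_fderiv ?_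
  ext v
  simp only [posGrad, ContinuousLinearMap.comp_id, Nat.add_one_sub_one, pow_one, nsmul_eq_mul,
    Nat.cast_ofNat, id_eq, add_apply, smul_apply, coe_innerSL_apply, smul_eq_mul, smul_add, map_add,
    map_smul, toDual_gradient, toDual_apply_apply]
  ring

/-- The horizontal part of the tangential projection `X - σ N` of the position vector. -/
noncomputable def posField (u : E n → ℝ) (x : E n) : E n := x + supportFun u x • Vfield u x

lemma inner_Vfield_posGrad : ⟪Vfield u x, posGrad u x⟫ = u x * aEl u x - supportFun u x := by
  have hW : aEl u x ≠ 0 := aEl_pos.ne'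
  rw [posGrad, Vfield, real_inner_smul_left, inner_add_right, real_inner_smul_right,
    real_inner_self_eq_norm_sq, real_inner_comm]
  field_simp
  linear_combination aEl_mul_supportFun (u := u) (x := x) - u x * aEl_sq (u := u) (x := x)

lemma sharp_posGrad : sharp (Vfield u x) (posGrad u x) = posField u x := by
  rw [sharp_apply, inner_Vfield_posGrad, posField, posGrad, ← aEl_smul_Vfield]
  module

lemma inner_posField_posGrad :
    ⟪posField u x, posGrad u x⟫ = ‖Pos u x‖ ^ 2 - supportFun u x ^ 2 := by
  rw [posField, inner_add_left, real_inner_smul_left, inner_Vfield_posGrad, posGrad,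
    inner_add_right, real_inner_smul_right, real_inner_self_eq_norm_sq, norm_Pos_sq]
  linear_combination u x * aEl_mul_supportFun (u := u) (x := x)

lemma gradient_sub_inner_gradient (hu : ContDiff ℝ 2 u) :
    ∇ (fun y ↦ u y - ⟪y, ∇ u y⟫) x = -fderiv ℝ (∇ u) x x := by
  refine ext_inner_right ℝ fun v ↦ ?_
  have hid : DifferentiableAt ℝ (fun y : E n ↦ y) x := differentiableAt_id
  rw [inner_gradient_left, fderiv_fun_sub (hu.differentiable two_ne_zero x)
    (hid.inner ℝ (differentiableAt_gradient hu)), sub_apply,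
    fderiv_inner_apply ℝ hid (differentiableAt_gradient hu), ← inner_gradient_left,
    inner_neg_left, inner_fderiv_gradient_comm hu]
  simp

lemma contDiff_supportFun (hu : ContDiff ℝ 2 u) : ContDiff ℝ 1 (supportFun u) := by
  have heq : supportFun u = fun y ↦ (aEl u y)⁻¹ * (u y - ⟪y, ∇ u y⟫) :=
    funext fun y ↦ (eq_inv_mul_iff_mul_eq₀ aEl_pos.ne').2 aEl_mul_supportFun
  rw [heq]
  exact ((contDiff_aEl hu).inv fun _ ↦ aEl_pos.ne').mul
    ((hu.of_le one_le_two).sub (contDiff_id.inner ℝ (contDiff_gradient hu (by norm_num))))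

lemma contDiff_posField (hu : ContDiff ℝ 2 u) : ContDiff ℝ 1 (posField u) :=
  contDiff_id.add ((contDiff_supportFun hu).smul (contDiff_Vfield hu))

lemma fderiv_supportFun_apply (hu : ContDiff ℝ 2 u) (v : E n) :
    fderiv ℝ (supportFun u) x v = -⟪posGrad u x, fderiv ℝ (Vfield u) x v⟫ := by
  have hprod : aEl u x * fderiv ℝ (supportFun u) x v + supportFun u x * fderiv ℝ (aEl u) x v =
      -⟪x, fderiv ℝ (∇ u) x v⟫ := by
    rw [← inner_fderiv_gradient_comm hu, ← inner_neg_left, ← gradient_sub_inner_gradient hu,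
      inner_gradient_left, ← funext fun y ↦ aEl_mul_supportFun (u := u) (x := y),
      fderiv_fun_mul ((contDiff_aEl hu).differentiable one_ne_zero x)
        ((contDiff_supportFun hu).differentiable one_ne_zero x)]
    simp
  have hW : aEl u x ≠ 0 := aEl_pos.ne'
  rw [fderiv_Vfield_apply hu, real_inner_smul_right, ← inner_sharp_comm, sharp_posGrad, posField,
    inner_add_left, real_inner_smul_left, ← fderiv_aEl_apply hu]
  field_simp
  linarith

lemma divergence_aEl_smul_posField (hu : ContDiff ℝ 2 u) (hs : ShrinkerEq u) :
    divergence (fun y ↦ aEl u y • posField u y) x = aEl u x * (n - supportFun u x ^ 2 / 2) := by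
  have hfield : (fun y ↦ aEl u y • posField u y) =
      fun y ↦ aEl u y • y + (u y - ⟪y, ∇ u y⟫) • Vfield u y := by
    funext y
    rw [posField, smul_add, smul_smul, aEl_mul_supportFun]
  have hW := (contDiff_aEl hu).differentiable one_ne_zero x
  have hν := (contDiff_Vfield hu).differentiable one_ne_zero x
  have hh : DifferentiableAt ℝ (fun y ↦ u y - ⟪y, ∇ u y⟫) x :=
    (hu.differentiable two_ne_zero x).sub
      (differentiableAt_id.inner ℝ (differentiableAt_gradient hu))
  rw [hfield, divergence_add (hW.fun_smul differentiableAt_fun_id) (hh.fun_smul hν),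
    divergence_smul hW differentiableAt_fun_id, divergence_smul hh hν, divergence_id,
    divergence_Vfield hu hs, gradient_aEl hu, gradient_sub_inner_gradient hu,
    ← aEl_mul_supportFun, inner_neg_left, inner_fderiv_gradient_comm hu,
    real_inner_comm (Vfield u x), finrank_euclideanSpace_fin]
  ring

/-- The Gaussian weight `exp (-|X|²/4)`, for which the graphs of solutions of the shrinker
equation are the critical points of the weighted area. -/
noncomputable def gaussWeight (u : E n → ℝ) (x : E n) : ℝ := Real.exp (-‖Pos u x‖ ^ 2 / 4)

lemma gaussWeight_pos : 0 < gaussWeight u x := Real.exp_pos _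

lemma contDiff_gaussWeight {m : ℕ∞ω} (hu : ContDiff ℝ m u) : ContDiff ℝ m (gaussWeight u) :=
  ((contDiff_norm_Pos_sq hu).neg.div_const 4).exp

lemma gradient_gaussWeight (hu : DifferentiableAt ℝ u x) :
    ∇ (gaussWeight u) x = -(gaussWeight u x / 2) • posGrad u x := by
  have hexp (t : ℝ) : HasDerivAt (fun s ↦ Real.exp (-s / 4)) (-(Real.exp (-t / 4) / 4)) t :=
    ((hasDerivAt_neg t).div_const 4).exp.congr_deriv (by ring)
  have h := gradient_comp (hexp _) (hasGradientAt_norm_Pos_sq hu).differentiableAt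
  rw [(hasGradientAt_norm_Pos_sq hu).gradient, smul_smul] at h
  refine h.trans ?_
  rw [gaussWeight]
  congr 1
  ring

/-- The density of the Gaussian-weighted area of the graph with respect to `dx`. -/
noncomputable def areaDensity (u : E n → ℝ) (x : E n) : ℝ := gaussWeight u x * aEl u x

lemma areaDensity_pos : 0 < areaDensity u x := mul_pos gaussWeight_pos aEl_pos

lemma contDiff_areaDensity (hu : ContDiff ℝ 2 u) : ContDiff ℝ 1 (areaDensity u) :=
  (contDiff_gaussWeight (hu.of_le one_le_two)).mul (contDiff_aEl hu)

lemma divergence_areaDensity_smul_posField (hu : ContDiff ℝ 2 u) (hs : ShrinkerEq u) :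
    divergence (fun y ↦ areaDensity u y • posField u y) x =
      areaDensity u x * (n - ‖Pos u x‖ ^ 2 / 2) := by
  have hρ := (contDiff_gaussWeight hu).differentiable two_ne_zero x
  have hW := (contDiff_aEl hu).differentiable one_ne_zero x
  have hZ := (contDiff_posField hu).differentiable one_ne_zero x
  simp only [areaDensity, mul_smul]
  rw [divergence_smul hρ (hW.fun_smul hZ), divergence_aEl_smul_posField hu hs,
    gradient_gaussWeight (hu.differentiable two_ne_zero x), real_inner_smul_left,
    real_inner_smul_right, real_inner_comm, inner_posField_posGrad]
  ring

end GraphGeometry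

section Caccioppoli

variable {n : ℕ} {u φ χ : E n → ℝ} {x : E n}

-- The derivative of the equation `div ν = -σ/2` along `e`, in weak form because `ν` is only `C¹`.
-- The right-hand side `-∂ₑσ/2 = ⟪posGrad u, ∂ₑν⟫/2` is cancelled by the gradient of the weight.
lemma integral_gaussWeight_mul_inner_gradient_fderiv_Vfield (hu : ContDiff ℝ 2 u)
    (hs : ShrinkerEq u) (hφ : ContDiff ℝ 1 φ) (hφc : HasCompactSupport φ) (e : E n) :
    ∫ x, gaussWeight u x * ⟪∇ φ x, fderiv ℝ (Vfield u) x e⟫ = 0 := by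
  have hν := contDiff_Vfield hu
  have hσ := contDiff_supportFun hu
  have hρ : ContDiff ℝ 1 (gaussWeight u) := contDiff_gaussWeight (hu.of_le one_le_two)
  have hψ : ContDiff ℝ 1 fun x ↦ gaussWeight u x * φ x := hρ.mul hφ
  have hψc : HasCompactSupport fun x ↦ gaussWeight u x * φ x := hφc.mul_left
  have hsplit (x) : gaussWeight u x * ⟪∇ φ x, fderiv ℝ (Vfield u) x e⟫ =
      ⟪∇ (fun y ↦ gaussWeight u y * φ y) x, fderiv ℝ (Vfield u) x e⟫ -
        gaussWeight u x * φ x * fderiv ℝ (supportFun u) x e / 2 := by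
    rw [gradient_mul (hρ.differentiable one_ne_zero x) (hφ.differentiable one_ne_zero x),
      gradient_gaussWeight (hu.differentiable two_ne_zero x), fderiv_supportFun_apply hu,
      inner_add_left, real_inner_smul_left, smul_smul, real_inner_smul_left]
    ring
  have hcomm : ∫ x, ⟪∇ (fun y ↦ gaussWeight u y * φ y) x, fderiv ℝ (Vfield u) x e⟫ =
      -(∫ x, fderiv ℝ (fun y ↦ gaussWeight u y * φ y) x e * supportFun u x) / 2 := by
    rw [integral_inner_gradient_fderiv_apply volume hψ hψc hν, ← integral_neg, ← integral_div]
    congr with x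
    rw [divergence_Vfield hu hs]
    ring
  simp only [hsplit]
  rw [integral_sub
      (integrable_inner_gradient volume hψ hψc
        ((hν.continuous_fderiv one_ne_zero).clm_apply continuous_const))
      ((integrable_mul_of_hasCompactSupport hψ.continuous hψc
        ((hσ.continuous_fderiv one_ne_zero).clm_apply continuous_const)).div_const 2),
    hcomm, integral_div, integral_mul_fderiv_apply volume hψ hψc hσ, sub_self]

/-- The weighted energy density `ρ W⁻¹ g^{ij} u_{ik} u_{jl} e_k e_l` of the derivative of `Du` in
the direction `e`, where `ρ` is the Gaussian weight and `W` the area element. -/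
noncomputable def hessEnergy (u : E n → ℝ) (e x : E n) : ℝ :=
  gaussWeight u x * (aEl u x)⁻¹ *
    ⟪sharp (Vfield u x) (fderiv ℝ (∇ u) x e), fderiv ℝ (∇ u) x e⟫

lemma continuous_sharp_Vfield (hu : ContDiff ℝ 2 u) {X : E n → E n} (hX : Continuous X) :
    Continuous fun x ↦ sharp (Vfield u x) (X x) := by
  have hν := (contDiff_Vfield hu).continuous
  simp only [sharp_apply]
  fun_prop

lemma continuous_hessEnergy (hu : ContDiff ℝ 2 u) (e : E n) : Continuous (hessEnergy u e) := by
  have hH : Continuous fun x ↦ fderiv ℝ (∇ u) x e :=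
    ((contDiff_gradient (k := 1) hu (by norm_num)).continuous_fderiv one_ne_zero).clm_apply
      continuous_const
  exact ((contDiff_gaussWeight hu).continuous.mul
    ((contDiff_aEl hu).continuous.inv₀ fun _ ↦ aEl_pos.ne')).mul
      ((continuous_sharp_Vfield hu hH).inner hH)

lemma hessEnergy_nonneg (e : E n) : 0 ≤ hessEnergy u e x :=
  mul_nonneg (mul_nonneg gaussWeight_pos.le (inv_nonneg.2 aEl_pos.le))
    (isPositive_sharp_Vfield.inner_nonneg_left _)

lemma fderiv_gradient_apply_eq_zero_of_hessEnergy {e : E n} (h : hessEnergy u e x = 0) :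
    fderiv ℝ (∇ u) x e = 0 := by
  have hsharp : ⟪sharp (Vfield u x) (fderiv ℝ (∇ u) x e), fderiv ℝ (∇ u) x e⟫ = 0 :=
    (mul_eq_zero.1 h).resolve_left (mul_pos gaussWeight_pos (inv_pos.2 aEl_pos)).ne'
  have hle := one_sub_norm_sq_mul_le_inner_sharp (w := Vfield u x) (fderiv ℝ (∇ u) x e)
  rw [hsharp, one_sub_norm_Vfield_sq] at hle
  have hsq := nonpos_of_mul_nonpos_right hle (inv_pos.2 (pow_pos aEl_pos 2))
  simpa using le_antisymm hsq (sq_nonneg _)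

lemma inner_gradient_sq_le (e : E n) : ⟪∇ u x, e⟫ ^ 2 ≤ aEl u x ^ 2 * ‖e‖ ^ 2 := by
  have hCS : ⟪∇ u x, e⟫ ^ 2 ≤ (‖∇ u x‖ * ‖e‖) ^ 2 :=
    sq_le_sq.2 ((abs_real_inner_le_norm _ _).trans (le_abs_self _))
  rw [aEl_sq]
  nlinarith [sq_nonneg ‖e‖]

lemma half_sq_mul_hessEnergy_sub_le (hu : ContDiff ℝ 2 u) (hχ : DifferentiableAt ℝ χ x) (e : E n) :
    χ x ^ 2 * hessEnergy u e x / 2 -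
        2 * ‖e‖ ^ 2 * (areaDensity u x * ⟪sharp (Vfield u x) (∇ χ x), ∇ χ x⟫) ≤
      gaussWeight u x *
        ⟪∇ (fun y ↦ χ y ^ 2 * ⟪∇ u y, e⟫) x, fderiv ℝ (Vfield u) x e⟫ := by
  have hχsq : ∇ (fun y ↦ χ y ^ 2) x = (2 * χ x) • ∇ χ x := by
    simpa using gradient_comp (hasDerivAt_pow 2 (χ x)) hχ
  have hgrad : ∇ (fun y ↦ χ y ^ 2 * ⟪∇ u y, e⟫) x =
      χ x ^ 2 • fderiv ℝ (∇ u) x e + (2 * χ x * ⟪∇ u x, e⟫) • ∇ χ x := by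
    rw [gradient_mul (hχ.fun_pow 2) ((differentiableAt_gradient hu).inner ℝ
      (differentiableAt_const e)), gradient_inner_gradient hu, hχsq, smul_smul, mul_comm ⟪∇ u x, e⟫]
  have hsharp : 0 ≤ ⟪sharp (Vfield u x) (∇ χ x), ∇ χ x⟫ :=
    isPositive_sharp_Vfield.inner_nonneg_left _
  have hW : 0 < aEl u x := aEl_pos
  have hρ : 0 < gaussWeight u x := gaussWeight_pos
  rw [hgrad, fderiv_Vfield_apply hu, real_inner_smul_right,
    ← mul_assoc (gaussWeight u x), hessEnergy, areaDensity]
  calc _ = gaussWeight u x * (aEl u x)⁻¹ *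
        (χ x ^ 2 / 2 * ⟪sharp (Vfield u x) (fderiv ℝ (∇ u) x e), fderiv ℝ (∇ u) x e⟫ -
          2 * (aEl u x ^ 2 * ‖e‖ ^ 2) * ⟪sharp (Vfield u x) (∇ χ x), ∇ χ x⟫) := by
        field_simp
    _ ≤ gaussWeight u x * (aEl u x)⁻¹ *
        (χ x ^ 2 / 2 * ⟪sharp (Vfield u x) (fderiv ℝ (∇ u) x e), fderiv ℝ (∇ u) x e⟫ -
          2 * ⟪∇ u x, e⟫ ^ 2 * ⟪sharp (Vfield u x) (∇ χ x), ∇ χ x⟫) := by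
        gcongr
        exact inner_gradient_sq_le e
    _ ≤ _ := mul_le_mul_of_nonneg_left
        (half_sq_mul_inner_sub_le_inner_smul_add_smul isPositive_sharp_Vfield _ _ _ _)
        (by positivity)

lemma integral_sq_mul_hessEnergy_le (hu : ContDiff ℝ 2 u) (hs : ShrinkerEq u)
    (hχ : ContDiff ℝ 1 χ) (hχc : HasCompactSupport χ) (e : E n) :
    ∫ x, χ x ^ 2 * hessEnergy u e x ≤ 4 * ‖e‖ ^ 2 *
      ∫ x, areaDensity u x * ⟪sharp (Vfield u x) (∇ χ x), ∇ χ x⟫ := by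
  have hh : ContDiff ℝ 1 fun y ↦ ⟪∇ u y, e⟫ :=
    (contDiff_gradient hu (by norm_num)).inner ℝ contDiff_const
  have hφ : ContDiff ℝ 1 fun y ↦ χ y ^ 2 * ⟪∇ u y, e⟫ := (hχ.pow 2).mul hh
  have hχ2c : HasCompactSupport fun y ↦ χ y ^ 2 := hχc.comp_left (zero_pow two_ne_zero)
  have hφc : HasCompactSupport fun y ↦ χ y ^ 2 * ⟪∇ u y, e⟫ := hχ2c.mul_right
  have hρ : Continuous (gaussWeight u) := (contDiff_gaussWeight hu).continuous
  have henergy : Integrable fun x ↦ χ x ^ 2 * hessEnergy u e x :=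
    integrable_mul_of_hasCompactSupport (hχ.continuous.pow 2) hχ2c (continuous_hessEnergy hu e)
  have hcut : Integrable fun x ↦
      areaDensity u x * ⟪sharp (Vfield u x) (∇ χ x), ∇ χ x⟫ := by
    simpa only [real_inner_smul_right, real_inner_comm] using
      integrable_inner_gradient volume hχ hχc ((contDiff_areaDensity hu).continuous.fun_smul
        (continuous_sharp_Vfield hu (contDiff_gradient (k := 0) hχ (by norm_num)).continuous))
  have hlin : Integrable fun x ↦ gaussWeight u x *
      ⟪∇ (fun y ↦ χ y ^ 2 * ⟪∇ u y, e⟫) x, fderiv ℝ (Vfield u) x e⟫ := by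
    simpa only [real_inner_smul_right] using integrable_inner_gradient volume hφ hφc
      (hρ.fun_smul
        (((contDiff_Vfield hu).continuous_fderiv one_ne_zero).clm_apply continuous_const))
  have hmono := integral_mono ((henergy.div_const 2).sub (hcut.const_mul (2 * ‖e‖ ^ 2))) hlin
    fun x ↦ half_sq_mul_hessEnergy_sub_le hu (hχ.differentiable one_ne_zero x) e
  simp only [Pi.sub_apply] at hmono
  rw [integral_sub (henergy.div_const 2) (hcut.const_mul _), integral_div, integral_const_mul,
    integral_gaussWeight_mul_inner_gradient_fderiv_Vfield hu hs hφ hφc] at hmono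
  linarith

end Caccioppoli

section Cutoff

variable {n : ℕ} {u : E n → ℝ} {x : E n} {R S : ℝ}

/-- The cutoff `(1 - |X|²/R)₊` on the graph; it is Lipschitz, and its square is `C¹`. -/
noncomputable def cutoff (u : E n → ℝ) (R : ℝ) (x : E n) : ℝ := max (1 - ‖Pos u x‖ ^ 2 / R) 0

lemma cutoff_nonneg : 0 ≤ cutoff u R x := le_max_right _ _

lemma cutoff_le_one (hR : 0 < R) : cutoff u R x ≤ 1 :=
  max_le (sub_le_self _ (by positivity)) zero_le_one

lemma cutoff_mono (hR : 0 < R) (hRS : R ≤ S) : cutoff u R x ≤ cutoff u S x := by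
  unfold cutoff
  gcongr

lemma cutoff_pos (hR : ‖Pos u x‖ ^ 2 < R) : 0 < cutoff u R x := by
  have hR₀ : 0 < R := (sq_nonneg _).trans_lt hR
  exact lt_max_of_lt_left (sub_pos.2 ((div_lt_one hR₀).2 hR))

lemma cutoff_eq_zero (hR : 0 < R) (h : R ≤ ‖Pos u x‖ ^ 2) : cutoff u R x = 0 :=
  max_eq_right (sub_nonpos.2 ((one_le_div hR).2 h))

lemma norm_Pos_sq_mul_cutoff_le (hR : 0 < R) : ‖Pos u x‖ ^ 2 * cutoff u R x ≤ R * cutoff u R x := by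
  rcases le_total R (‖Pos u x‖ ^ 2) with h | h
  · simp [cutoff_eq_zero hR h]
  · exact mul_le_mul_of_nonneg_right h cutoff_nonneg

lemma hasCompactSupport_cutoff (hR : 0 < R) : HasCompactSupport (cutoff u R) := by
  refine HasCompactSupport.intro (isCompact_closedBall (0 : E n) √R) fun x hx ↦
    cutoff_eq_zero hR ?_
  have hx' : R < ‖x‖ ^ 2 := Real.lt_sq_of_sqrt_lt (by simpa using hx)
  linarith [norm_Pos_sq (u := u) (x := x), sq_nonneg (u x)]

lemma contDiff_cutoff_sq (hu : ContDiff ℝ 1 u) : ContDiff ℝ 1 fun y ↦ cutoff u R y ^ 2 :=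
  contDiff_max_zero_sq.comp (contDiff_const.sub ((contDiff_norm_Pos_sq hu).div_const R))

lemma hasCompactSupport_cutoff_sq (hR : 0 < R) : HasCompactSupport fun y ↦ cutoff u R y ^ 2 :=
  (hasCompactSupport_cutoff hR).comp_left (zero_pow two_ne_zero)

lemma gradient_cutoff_sq (hu : DifferentiableAt ℝ u x) :
    ∇ (fun y ↦ cutoff u R y ^ 2) x = -(4 / R * cutoff u R x) • posGrad u x := by
  have hmax (t : ℝ) : HasDerivAt (fun s ↦ max (1 - s / R) 0 ^ 2)
      (2 * max (1 - t / R) 0 * -(1 / R)) t :=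
    (hasDerivAt_max_zero_sq _).comp t (((hasDerivAt_id t).div_const R).const_sub 1)
  have h := gradient_comp (hmax _) (hasGradientAt_norm_Pos_sq hu).differentiableAt
  rw [(hasGradientAt_norm_Pos_sq hu).gradient, smul_smul] at h
  refine h.trans ?_
  rw [cutoff]
  congr 1
  ring

lemma inner_posField_posGrad_nonneg : 0 ≤ ⟪posField u x, posGrad u x⟫ :=
  sharp_posGrad (u := u) (x := x) ▸ isPositive_sharp_Vfield.inner_nonneg_left _

lemma inner_sharp_gradient_cutoff_sq_le (hu : DifferentiableAt ℝ u x) (hR : 0 < R) :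
    ⟪sharp (Vfield u x) (∇ (fun y ↦ cutoff u R y ^ 2) x), ∇ (fun y ↦ cutoff u R y ^ 2) x⟫ ≤
      16 / R * cutoff u R x ^ 2 := by
  have hη := norm_Pos_sq_mul_cutoff_le (u := u) (x := x) hR
  rw [gradient_cutoff_sq hu, map_smul, real_inner_smul_left, real_inner_smul_right, sharp_posGrad,
    inner_posField_posGrad]
  calc _ = 16 / R ^ 2 * (cutoff u R x ^ 2 * (‖Pos u x‖ ^ 2 - supportFun u x ^ 2)) := by ring
    _ ≤ 16 / R ^ 2 * (cutoff u R x ^ 2 * ‖Pos u x‖ ^ 2) := by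
        gcongr
        exact sub_le_self _ (sq_nonneg _)
    _ = 16 / R ^ 2 * (cutoff u R x * (‖Pos u x‖ ^ 2 * cutoff u R x)) := by ring
    _ ≤ 16 / R ^ 2 * (cutoff u R x * (R * cutoff u R x)) := by
        gcongr
        exact cutoff_nonneg
    _ = 16 / R * cutoff u R x ^ 2 := by field_simp

lemma integrable_cutoff_sq_mul {g : E n → ℝ} (hu : ContDiff ℝ 1 u) (hR : 0 < R)
    (hg : Continuous g) : Integrable fun x ↦ cutoff u R x ^ 2 * g x :=
  integrable_mul_of_hasCompactSupport (contDiff_cutoff_sq hu).continuous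
    (hasCompactSupport_cutoff_sq hR) hg

lemma sub_mul_cutoff_sq_le (hR : 0 < R) (hS : 0 < S) :
    (S - ‖Pos u x‖ ^ 2) * cutoff u R x ^ 2 ≤ 4 * S * cutoff u (2 * S) x ^ 2 := by
  rcases le_total S (‖Pos u x‖ ^ 2) with h | h
  · exact (mul_nonpos_of_nonpos_of_nonneg (sub_nonpos.2 h) (sq_nonneg _)).trans (by positivity)
  have hhalf : 1 / 2 ≤ cutoff u (2 * S) x := by
    refine le_max_of_le_left ?_
    have : ‖Pos u x‖ ^ 2 / (2 * S) ≤ 1 / 2 := by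
      rw [div_le_iff₀ (by positivity)]
      linarith
    linarith
  calc (S - ‖Pos u x‖ ^ 2) * cutoff u R x ^ 2 ≤ S * 1 := by
        gcongr
        · exact sub_le_self _ (sq_nonneg _)
        · exact pow_le_one₀ cutoff_nonneg (cutoff_le_one hR)
    _ = 4 * S * (1 / 2) ^ 2 := by ring
    _ ≤ 4 * S * cutoff u (2 * S) x ^ 2 := by gcongr

end Cutoff

section Bernstein

variable {n : ℕ} {u : E n → ℝ} {R : ℝ}

lemma integral_cutoff_sq_mul_nonneg (hu : ContDiff ℝ 2 u) (hs : ShrinkerEq u) (hR : 0 < R) :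
    0 ≤ ∫ x, cutoff u R x ^ 2 * (areaDensity u x * (n - ‖Pos u x‖ ^ 2 / 2)) := by
  have hX : ContDiff ℝ 1 fun y ↦ areaDensity u y • posField u y :=
    (contDiff_areaDensity hu).smul (contDiff_posField hu)
  have h := integral_mul_divergence volume (contDiff_cutoff_sq (R := R) (hu.of_le one_le_two))
    (hasCompactSupport_cutoff_sq hR) hX
  simp only [divergence_areaDensity_smul_posField hu hs] at h
  rw [h, ← integral_neg]
  refine integral_nonneg fun x ↦ ?_
  have hZY := inner_posField_posGrad_nonneg (u := u) (x := x)
  have hη := cutoff_nonneg (u := u) (x := x) (R := R)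
  have hA := areaDensity_pos (u := u) (x := x)
  rw [gradient_cutoff_sq (hu.differentiable two_ne_zero x), real_inner_smul_left,
    real_inner_smul_right, neg_mul, neg_neg, real_inner_comm]
  positivity

-- The mass is at most the integral of `2n + 1 - |X|²`, which is negative outside a fixed ball.
lemma integral_cutoff_sq_mul_areaDensity_le (hu : ContDiff ℝ 2 u) (hs : ShrinkerEq u)
    (hR : 0 < R) :
    ∫ x, cutoff u R x ^ 2 * areaDensity u x ≤
      4 * (2 * n + 1) * ∫ x, cutoff u (2 * (2 * n + 1)) x ^ 2 * areaDensity u x := by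
  have hu₁ : ContDiff ℝ 1 u := hu.of_le one_le_two
  have hA : Continuous (areaDensity u) := (contDiff_areaDensity hu).continuous
  have hK : (0 : ℝ) < 2 * n + 1 := by positivity
  have hf : Continuous fun x ↦ (n : ℝ) - ‖Pos u x‖ ^ 2 / 2 :=
    continuous_const.sub ((contDiff_norm_Pos_sq hu).continuous.div_const 2)
  have hmass := integrable_cutoff_sq_mul hu₁ hR hA
  have hball := (integrable_cutoff_sq_mul (R := 2 * (2 * n + 1)) hu₁ (by positivity) hA).const_mul
    (4 * (2 * n + 1))
  have hdrift := (integrable_cutoff_sq_mul hu₁ hR (hA.fun_mul hf)).const_mul 2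
  have hmono := integral_mono (hmass.add hdrift) hball fun x ↦ by
    have hpoint := mul_le_mul_of_nonneg_right
      (sub_mul_cutoff_sq_le (u := u) (x := x) hR hK) (areaDensity_pos (u := u) (x := x)).le
    simp only [Pi.add_apply]
    linarith
  simp only [Pi.add_apply] at hmono
  rw [integral_add hmass hdrift, integral_const_mul, integral_const_mul] at hmono
  linarith [integral_cutoff_sq_mul_nonneg hu hs hR]

lemma exists_integral_cutoff_pow_mul_hessEnergy_le (hu : ContDiff ℝ 2 u) (hs : ShrinkerEq u)
    (e : E n) : ∃ C, ∀ R > 0, ∫ x, (cutoff u R x ^ 2) ^ 2 * hessEnergy u e x ≤ C / R := by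
  let A := 4 * (2 * n + 1) * ∫ x, cutoff u (2 * (2 * n + 1)) x ^ 2 * areaDensity u x
  have hu₁ : ContDiff ℝ 1 u := hu.of_le one_le_two
  refine ⟨64 * ‖e‖ ^ 2 * A, fun R hR ↦ ?_⟩
  have hgrad : ∫ x, areaDensity u x * ⟪sharp (Vfield u x) (∇ (fun y ↦ cutoff u R y ^ 2) x),
      ∇ (fun y ↦ cutoff u R y ^ 2) x⟫ ≤ ∫ x, 16 / R * (cutoff u R x ^ 2 * areaDensity u x) := by
    refine integral_mono_of_nonneg
      (ae_of_all _ fun x ↦ mul_nonneg areaDensity_pos.le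
        (isPositive_sharp_Vfield.inner_nonneg_left _))
      ((integrable_cutoff_sq_mul hu₁ hR (contDiff_areaDensity hu).continuous).const_mul _)
      (ae_of_all _ fun x ↦ ?_)
    have hpoint := mul_le_mul_of_nonneg_left (inner_sharp_gradient_cutoff_sq_le
      (hu₁.differentiable one_ne_zero x) hR) (areaDensity_pos (u := u) (x := x)).le
    linarith
  calc ∫ x, (cutoff u R x ^ 2) ^ 2 * hessEnergy u e x
      ≤ 4 * ‖e‖ ^ 2 * ∫ x, areaDensity u x *
          ⟪sharp (Vfield u x) (∇ (fun y ↦ cutoff u R y ^ 2) x), ∇ (fun y ↦ cutoff u R y ^ 2) x⟫ :=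
        integral_sq_mul_hessEnergy_le hu hs (contDiff_cutoff_sq hu₁)
          (hasCompactSupport_cutoff_sq hR) e
    _ ≤ 4 * ‖e‖ ^ 2 * (16 / R * A) := by
        gcongr
        refine hgrad.trans ?_
        rw [integral_const_mul]
        gcongr
        exact integral_cutoff_sq_mul_areaDensity_le hu hs hR
    _ = 64 * ‖e‖ ^ 2 * A / R := by ring

lemma hessEnergy_eq_zero (hu : ContDiff ℝ 2 u) (hs : ShrinkerEq u) (e x : E n) :
    hessEnergy u e x = 0 := by
  obtain ⟨C, hC⟩ := exists_integral_cutoff_pow_mul_hessEnergy_le hu hs e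
  let S := ‖Pos u x‖ ^ 2 + 1
  let F (R : ℝ) (y : E n) := (cutoff u R y ^ 2) ^ 2 * hessEnergy u e y
  have hu₁ : ContDiff ℝ 1 u := hu.of_le one_le_two
  have hS : 0 < S := by positivity
  have hFcont (R) : Continuous (F R) :=
    ((contDiff_cutoff_sq hu₁).continuous.pow 2).mul (continuous_hessEnergy hu e)
  have hFsupp {R} (hR : 0 < R) : HasCompactSupport (F R) :=
    ((hasCompactSupport_cutoff_sq hR).comp_left (zero_pow two_ne_zero)).mul_right
  have hFnonneg (R) (y) : 0 ≤ F R y := mul_nonneg (sq_nonneg _) (hessEnergy_nonneg e)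
  have hle {R} (hSR : S ≤ R) : ∫ y, F S y ≤ C / R := by
    refine (integral_mono ((hFcont S).integrable_of_hasCompactSupport (hFsupp hS))
      ((hFcont R).integrable_of_hasCompactSupport (hFsupp (hS.trans_le hSR))) fun y ↦ ?_).trans
      (hC R (hS.trans_le hSR))
    have hcut := cutoff_mono (u := u) (x := y) hS hSR
    have hη := cutoff_nonneg (u := u) (x := y) (R := S)
    have hE := hessEnergy_nonneg (u := u) (x := y) e
    simp only [F]
    gcongr
  have hnonpos : ∫ y, F S y ≤ 0 :=
    ge_of_tendsto (tendsto_const_nhds.div_atTop tendsto_id) (eventually_atTop.2 ⟨S, fun R ↦ hle⟩)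
  by_contra hx
  have hFx : F S x ≠ 0 :=
    mul_ne_zero (pow_ne_zero 2 (pow_ne_zero 2 (cutoff_pos (lt_add_one _)).ne')) hx
  exact hnonpos.not_gt ((hFcont S).integral_pos_of_hasCompactSupport_nonneg_nonzero (hFsupp hS)
    (hFnonneg S) hFx)

lemma fderiv_gradient_eq_zero (hu : ContDiff ℝ 2 u) (hs : ShrinkerEq u) (x : E n) :
    fderiv ℝ (∇ u) x = 0 :=
  ContinuousLinearMap.ext fun e ↦
    fderiv_gradient_apply_eq_zero_of_hessEnergy (hessEnergy_eq_zero hu hs e x)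

theorem stmt_15_general (n : ℕ) (u : E n → ℝ) (hu : ContDiff ℝ 2 u) (hshr : ShrinkerEq u) :
    ∃ a : E n, ∀ x, u x = ⟪a, x⟫ := by
  have hflat := fderiv_gradient_eq_zero hu hshr
  have hgrad (x) : ∇ u x = ∇ u 0 :=
    is_const_of_fderiv_eq_zero (𝕜 := ℝ) (fun _ ↦ differentiableAt_gradient hu) hflat x 0
  have hσ (x) : supportFun u x = 0 := by
    have hdiv := divergence_Vfield (x := x) hu hshr
    have hν : fderiv ℝ (Vfield u) x = 0 := by
      ext1 v
      simp [fderiv_Vfield_apply hu, hflat]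
    rw [divergence, hν, ContinuousLinearMap.toLinearMap_zero, map_zero] at hdiv
    linarith
  refine ⟨∇ u 0, fun x ↦ ?_⟩
  have h := aEl_mul_supportFun (u := u) (x := x)
  rw [hσ, mul_zero, hgrad, real_inner_comm] at h
  exact sub_eq_zero.1 h.symm

end Bernstein

/-- Bernstein theorem for graphical self-shrinkers: every smooth entire
solution of the self-shrinker equation is linear, `u(x) = a₁x₁ + ⋯ + aₙxₙ`. -/
theorem stmt_15 (n : ℕ) (u : E n → ℝ) (hu : ContDiff ℝ (⊤ : ℕ∞) u) (hshr : ShrinkerEq u) :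
    ∃ a : E n, ∀ x, u x = ⟪a, x⟫ :=
  stmt_15_general n u (contDiff_infty.1 hu 2) hshr
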